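/- arXiv:2101.05686 — 3 statements merged into one kernel-verified Lean document; each statement's English description precedes it below -/
import Mathlib

section
/- Let Φ be a quantum channel on d×d complex matrices given by Kraus operators V_1,…,V_J with Σ_j V_jᴴ V_j = I, let p ∈ [0,1], and let Λ = p·Φ be the unbiased quantum operation with Kraus operators √p·V_1,…,√p·V_J. Then the Holevo capacity of the generalized erasure channel Γ_Λ satisfies C_χ(Γ_Λ) = p · C_χ(Φ). -/
open Matrix ComplexOrder

/-- The von Neumann entropy S(ρ) = Σ_i −λ_i log λ_i over the eigenvalues of a Hermitian
matrix (and 0 on non-Hermitian matrices). Natural logarithm, 0 log 0 = 0. -/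
noncomputable def vnEnt {n : Type*} [Fintype n] [DecidableEq n] (ρ : Matrix n n ℂ) : ℝ :=
  if h : ρ.IsHermitian then ∑ i, -(h.eigenvalues i * Real.log (h.eigenvalues i)) else 0

/-- The Holevo capacity of a map Ψ on matrices: the supremum over finite ensembles of
density matrices of S(Ψ(Σ π_i ρ_i)) − Σ π_i S(Ψ(ρ_i)). -/
noncomputable def holevoCap {n m : Type*} [Fintype n] [DecidableEq n] [Fintype m] [DecidableEq m]
    (Ψ : Matrix n n ℂ → Matrix m m ℂ) : ℝ :=
  sSup {x : ℝ | ∃ (N : ℕ) (π : Fin N → ℝ) (ρ : Fin N → Matrix n n ℂ),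
    (∀ i, 0 ≤ π i) ∧ (∑ i, π i = 1) ∧ (∀ i, (ρ i).PosSemidef ∧ (ρ i).trace = 1) ∧
    x = vnEnt (Ψ (∑ i, (π i : ℂ) • ρ i)) - ∑ i, π i * vnEnt (Ψ (ρ i))}

/-- The generalized erasure channel of a quantum operation Λ. -/
noncomputable def gec {n : Type*} [Fintype n] [DecidableEq n]
    (Λ : Matrix n n ℂ → Matrix n n ℂ) (X : Matrix n n ℂ) :
    Matrix (n ⊕ Fin 1) (n ⊕ Fin 1) ℂ :=
  Matrix.fromBlocks (Λ X) 0 0 (Matrix.of fun _ _ => X.trace - (Λ X).trace)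

/-!
On density matrices, `Γ_{pΦ}(ρ)` is the direct sum of `p Φ(ρ)` and the scalar `1 - p`, so its
entropy is `p S(Φ(ρ)) + h(p)` with `h` the binary entropy. The constant `h(p)` cancels in the
Holevo quantity of every ensemble, which is therefore scaled by `p`, and so is the supremum.
-/

section Entropy

variable {m n : Type*} [Fintype m] [DecidableEq m] [Fintype n] [DecidableEq n]

lemma vnEnt_eq_sum_negMulLog_eigenvalues {A : Matrix n n ℂ} (hA : A.IsHermitian) :
    vnEnt A = ∑ i, Real.negMulLog (hA.eigenvalues i) := by
  simp only [vnEnt, dif_pos hA, Real.negMulLog_eq_neg]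

lemma vnEnt_eq_sum_roots_charpoly {A : Matrix n n ℂ} (hA : A.IsHermitian) :
    vnEnt A = (A.charpoly.roots.map fun z => Real.negMulLog z.re).sum := by
  rw [vnEnt_eq_sum_negMulLog_eigenvalues hA, hA.roots_charpoly_eq_eigenvalues, Multiset.map_map]
  rfl

lemma vnEnt_cfc {A : Matrix n n ℂ} (hA : A.IsHermitian) (f : ℝ → ℝ) :
    vnEnt (cfc f A) = ∑ i, Real.negMulLog (f (hA.eigenvalues i)) := by
  have hcfc : (cfc f A).IsHermitian := cfc_predicate f A
  have roots_eq : (cfc f A).charpoly.roots =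
      Finset.univ.val.map fun i => (f (hA.eigenvalues i) : ℂ) := by
    rw [hA.charpoly_cfc_eq, Polynomial.roots_prod _ _
      (Finset.prod_ne_zero_iff.mpr fun _ _ => Polynomial.X_sub_C_ne_zero _)]
    simp
  rw [vnEnt_eq_sum_roots_charpoly hcfc, roots_eq, Multiset.map_map]
  rfl

lemma sum_eigenvalues_eq_re_trace {A : Matrix n n ℂ} (hA : A.IsHermitian) :
    ∑ i, hA.eigenvalues i = A.trace.re := by
  simp [hA.trace_eq_sum_eigenvalues]

lemma vnEnt_smul {A : Matrix n n ℂ} (hA : A.IsHermitian) (p : ℝ) :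
    vnEnt ((p : ℂ) • A) = p * vnEnt A + A.trace.re * Real.negMulLog p := by
  have smul_eq_cfc : (p : ℂ) • A = cfc (p * ·) A := by
    rw [cfc_const_mul_id p A hA.isSelfAdjoint, Complex.coe_smul]
  rw [smul_eq_cfc, vnEnt_cfc hA, vnEnt_eq_sum_negMulLog_eigenvalues hA,
    ← sum_eigenvalues_eq_re_trace hA]
  simp only [Real.negMulLog_mul, Finset.sum_add_distrib, Finset.mul_sum, Finset.sum_mul]
  ring

lemma vnEnt_fromBlocks_zero_zero {A : Matrix m m ℂ} {D : Matrix n n ℂ} (hA : A.IsHermitian)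
    (hD : D.IsHermitian) : vnEnt (fromBlocks A 0 0 D) = vnEnt A + vnEnt D := by
  have hAD : (fromBlocks A 0 0 D).IsHermitian := hA.fromBlocks conjTranspose_zero hD
  have charpoly_ne_zero : A.charpoly * D.charpoly ≠ 0 :=
    (A.charpoly_monic.mul D.charpoly_monic).ne_zero
  rw [vnEnt_eq_sum_roots_charpoly hAD, charpoly_fromBlocks_zero₁₂,
    Polynomial.roots_mul charpoly_ne_zero, Multiset.map_add, Multiset.sum_add,
    ← vnEnt_eq_sum_roots_charpoly hA, ← vnEnt_eq_sum_roots_charpoly hD]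

lemma vnEnt_of_unique [Unique n] {A : Matrix n n ℂ} (hA : A.IsHermitian) :
    vnEnt A = Real.negMulLog A.trace.re := by
  rw [vnEnt_eq_sum_negMulLog_eigenvalues hA, ← sum_eigenvalues_eq_re_trace hA,
    Fintype.sum_unique, Fintype.sum_unique]

lemma vnEnt_gec {Λ : Matrix n n ℂ → Matrix n n ℂ} {X : Matrix n n ℂ} (hX : X.IsHermitian)
    (hΛX : (Λ X).IsHermitian) :
    vnEnt (gec Λ X) = vnEnt (Λ X) + Real.negMulLog (X.trace - (Λ X).trace).re := by
  have erasure_isHermitian :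
      (of fun _ _ : Fin 1 => X.trace - (Λ X).trace).IsHermitian := by
    ext
    simp [← trace_conjTranspose, hX.eq, hΛX.eq]
  rw [gec, vnEnt_fromBlocks_zero_zero hΛX erasure_isHermitian,
    vnEnt_of_unique erasure_isHermitian]
  simp [trace]

end Entropy

/-- A density matrix, i.e. a quantum state: a positive semidefinite matrix of trace one. It unfolds
to the condition on the members of an ensemble in `holevoCap`. -/
def IsDensityMatrix {n : Type*} [Fintype n] (ρ : Matrix n n ℂ) : Prop :=
  ρ.PosSemidef ∧ ρ.trace = 1

namespace IsDensityMatrix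

variable {ι m n : Type*} [Fintype ι] [Fintype m] [Fintype n]

lemma sum_smul {π : ι → ℝ} {ρ : ι → Matrix n n ℂ} (hπ : ∀ i, 0 ≤ π i) (hπ_sum : ∑ i, π i = 1)
    (hρ : ∀ i, IsDensityMatrix (ρ i)) : IsDensityMatrix (∑ i, (π i : ℂ) • ρ i) := by
  refine ⟨posSemidef_sum _ fun i _ => (hρ i).1.smul (by exact_mod_cast hπ i), ?_⟩
  simp only [trace_sum, trace_smul, (hρ _).2, smul_eq_mul, mul_one]
  exact_mod_cast hπ_sum

lemma sum_kraus [DecidableEq n] {V : ι → Matrix m n ℂ} (hV : ∑ j, (V j)ᴴ * V j = 1)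
    {ρ : Matrix n n ℂ} (hρ : IsDensityMatrix ρ) : IsDensityMatrix (∑ j, V j * ρ * (V j)ᴴ) := by
  refine ⟨posSemidef_sum _ fun j _ => hρ.1.mul_mul_conjTranspose_same (V j), ?_⟩
  calc (∑ j, V j * ρ * (V j)ᴴ).trace
    _ = ((∑ j, (V j)ᴴ * V j) * ρ).trace := by
      simp only [trace_sum, Finset.sum_mul, trace_mul_cycle (V _) ρ]
    _ = 1 := by rw [hV, one_mul, hρ.2]

end IsDensityMatrix

section Holevo

variable {ι m m' n : Type*} [Fintype ι] [Fintype m] [DecidableEq m] [Fintype m'] [DecidableEq m']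
  [Fintype n]

/-- The Holevo quantity of the ensemble `(π i, ρ i)` under the map `Ψ`, whose supremum over all
ensembles is `holevoCap Ψ`. -/
noncomputable def holevoQuantity (Ψ : Matrix n n ℂ → Matrix m m ℂ) (π : ι → ℝ)
    (ρ : ι → Matrix n n ℂ) : ℝ :=
  vnEnt (Ψ (∑ i, (π i : ℂ) • ρ i)) - ∑ i, π i * vnEnt (Ψ (ρ i))

variable {Φ : Matrix n n ℂ → Matrix m m ℂ} {Ψ : Matrix n n ℂ → Matrix m' m' ℂ} {p c : ℝ}

lemma holevoQuantity_eq_mul_of_vnEnt_eq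
    (hΨ : ∀ ρ, IsDensityMatrix ρ → vnEnt (Ψ ρ) = p * vnEnt (Φ ρ) + c)
    {π : ι → ℝ} {ρ : ι → Matrix n n ℂ} (hπ : ∀ i, 0 ≤ π i) (hπ_sum : ∑ i, π i = 1)
    (hρ : ∀ i, IsDensityMatrix (ρ i)) :
    holevoQuantity Ψ π ρ = p * holevoQuantity Φ π ρ := by
  have mean_entropy :
      ∑ i, π i * vnEnt (Ψ (ρ i)) = p * ∑ i, π i * vnEnt (Φ (ρ i)) + c := by
    calc ∑ i, π i * vnEnt (Ψ (ρ i))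
      _ = ∑ i, (p * (π i * vnEnt (Φ (ρ i))) + π i * c) :=
        Finset.sum_congr rfl fun i _ => by rw [hΨ _ (hρ i)]; ring
      _ = p * ∑ i, π i * vnEnt (Φ (ρ i)) + c := by
        rw [Finset.sum_add_distrib, ← Finset.mul_sum, ← Finset.sum_mul, hπ_sum, one_mul]
  rw [holevoQuantity, holevoQuantity, mean_entropy, hΨ _ (.sum_smul hπ hπ_sum hρ)]
  ring

lemma holevoCap_eq_mul_of_vnEnt_eq [DecidableEq n] (hp : 0 ≤ p)
    (hΨ : ∀ ρ, IsDensityMatrix ρ → vnEnt (Ψ ρ) = p * vnEnt (Φ ρ) + c) :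
    holevoCap Ψ = p * holevoCap Φ := by
  rw [holevoCap, holevoCap, ← smul_eq_mul, ← Real.sSup_smul_of_nonneg hp]
  congr 1
  ext x
  rw [Set.mem_smul_set]
  constructor
  · rintro ⟨N, π, ρ, hπ, hπ_sum, hρ, rfl⟩
    exact ⟨holevoQuantity Φ π ρ, ⟨N, π, ρ, hπ, hπ_sum, hρ, rfl⟩,
      (holevoQuantity_eq_mul_of_vnEnt_eq hΨ hπ hπ_sum hρ).symm⟩
  · rintro ⟨_, ⟨N, π, ρ, hπ, hπ_sum, hρ, rfl⟩, rfl⟩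
    exact ⟨N, π, ρ, hπ, hπ_sum, hρ, (holevoQuantity_eq_mul_of_vnEnt_eq hΨ hπ hπ_sum hρ).symm⟩

end Holevo

section UnbiasedErasure

variable {n : Type*} [Fintype n] [DecidableEq n] {Φ : Matrix n n ℂ → Matrix n n ℂ}

lemma vnEnt_gec_smul {ρ : Matrix n n ℂ} (hρ : IsDensityMatrix ρ) (hΦρ : IsDensityMatrix (Φ ρ))
    (p : ℝ) :
    vnEnt (gec (fun X => (p : ℂ) • Φ X) ρ) = p * vnEnt (Φ ρ) + Real.binEntropy p := by
  have smul_isHermitian : ((p : ℂ) • Φ ρ).IsHermitian :=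
    hΦρ.1.isHermitian.smul (Complex.conj_ofReal p)
  rw [vnEnt_gec hρ.1.isHermitian smul_isHermitian, vnEnt_smul hΦρ.1.isHermitian, trace_smul,
    hρ.2, hΦρ.2, Real.binEntropy_eq_negMulLog_add_negMulLog_one_sub]
  simp [add_assoc]

theorem holevo_capacity_gec_unbiased_general
    (hΦ : ∀ ρ, IsDensityMatrix ρ → IsDensityMatrix (Φ ρ)) {p : ℝ} (hp : p ∈ Set.Icc (0 : ℝ) 1) :
    holevoCap (gec fun X => (p : ℂ) • Φ X) = p * holevoCap Φ :=
  holevoCap_eq_mul_of_vnEnt_eq hp.1 fun ρ hρ => vnEnt_gec_smul hρ (hΦ ρ hρ) p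

end UnbiasedErasure

/-- for the unbiased quantum operation Λ = p·Φ attenuating a channel Φ,
the Holevo capacity of the generalized erasure channel satisfies C_χ(Γ_Λ) = p·C_χ(Φ). -/
theorem holevo_capacity_gec_unbiased (d J : ℕ)
    (V : Fin J → Matrix (Fin d) (Fin d) ℂ)
    (hV : ∑ j, (V j)ᴴ * V j = 1)
    (p : ℝ) (hp : p ∈ Set.Icc (0:ℝ) 1) :
    holevoCap (gec (fun X => (p : ℂ) • ∑ j, V j * X * (V j)ᴴ))
      = p * holevoCap (fun X => ∑ j, V j * X * (V j)ᴴ) :=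
  holevo_capacity_gec_unbiased_general (fun _ hρ => hρ.sum_kraus hV) hp
end

section
/- Let p_H, p_V ∈ [0,1] and let Γ and Γ̃ be the generalized erasure channel of the polarization dependent loss operation and its complementary channel. Then there exist finitely many 3×3 matrices K_1,…,K_M with Σ_m K_mᴴ K_m = I such that Σ_m K_m Γ(ρ) K_mᴴ = Γ̃(ρ) for every 2×2 matrix ρ (i.e., Γ is degradable) if and only if min(p_H, p_V) ≥ 1/2, or p_H = 1, or p_V = 1. -/
open Matrix ComplexOrder

/-- The generalized erasure channel of the polarization dependent loss operation
Λ(ρ) = AρAᴴ with A = diag(√p_H, √p_V). -/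
noncomputable def GammaPDL (pH pV : ℝ) (ρ : Matrix (Fin 2) (Fin 2) ℂ) :
    Matrix (Fin 3) (Fin 3) ℂ :=
  !![(pH : ℂ) * ρ 0 0, (Real.sqrt (pH * pV) : ℂ) * ρ 0 1, 0;
     (Real.sqrt (pH * pV) : ℂ) * ρ 1 0, (pV : ℂ) * ρ 1 1, 0;
     0, 0, ρ.trace - (pH : ℂ) * ρ 0 0 - (pV : ℂ) * ρ 1 1]

/-- The complementary channel of the generalized erasure channel of the polarization
dependent loss operation. -/
noncomputable def GammaPDLc (pH pV : ℝ) (ρ : Matrix (Fin 2) (Fin 2) ℂ) :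
    Matrix (Fin 3) (Fin 3) ℂ :=
  !![(pH : ℂ) * ρ 0 0 + (pV : ℂ) * ρ 1 1, 0, 0;
     0, ((1 - pH : ℝ) : ℂ) * ρ 0 0, (Real.sqrt ((1 - pH) * (1 - pV)) : ℂ) * ρ 0 1;
     0, (Real.sqrt ((1 - pH) * (1 - pV)) : ℂ) * ρ 1 0, ((1 - pV : ℝ) : ℂ) * ρ 1 1]

/-!
A Kraus family `K` acts on populations (diagonal matrices) through the nonnegative matrix
`T i j = ∑ k, ‖K k i j‖ ^ 2`, whose columns sum to `1` when `K` is trace preserving. If a degrading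
map exists and `pH, pV < 1`, then the basis states `H` and `V` both put weight on the erasure flag
of `Γ`, while `Γ̃` never reaches level `2` from `H` nor level `1` from `V`. Hence the flag is sent
entirely to level `0`, whose population `pH` (resp. `pV`) is therefore at least `1 - pH`
(resp. `1 - pV`).

Conversely, for `1/2 ≤ pH, pV` one attenuates the two polarizations by the further factors
`(1 - pH) / pH` and `(1 - pV) / pV`, both in `[0, 1]`, and dumps everything else into level `0`. If
`pH = 1` or `pV = 1`, then `Γ̃` outputs diagonal matrices, and measuring in the standard basis and
relabelling the outcome is enough.
-/

section Kraus

variable {ι m n R : Type*} [Fintype ι] [Fintype n]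

/-- The completely positive map `X ↦ ∑ k, K k * X * (K k)ᴴ` with Kraus operators `K`. Over `ℂ` it is
trace preserving exactly when `∑ k, (K k)ᴴ * K k = 1`, which is not part of the definition. -/
def krausMap [NonUnitalSemiring R] [StarRing R] (K : ι → Matrix m n R) (X : Matrix n n R) :
    Matrix m m R :=
  ∑ k, K k * X * (K k)ᴴ

/-- `DegradesTo Φ Ψ` says that some trace preserving Kraus map turns the outputs of `Φ` into those
of `Ψ`. A channel is degradable when it degrades to its complementary channel. -/
def DegradesTo [Fintype m] [DecidableEq n] [Semiring R] [StarRing R] {α : Type*}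
    (Φ : α → Matrix n n R) (Ψ : α → Matrix m m R) : Prop :=
  ∃ (M : ℕ) (K : Fin M → Matrix m n R),
    ∑ k, (K k)ᴴ * K k = 1 ∧ ∀ ρ, krausMap K (Φ ρ) = Ψ ρ

end Kraus

section Transition

variable {ι m n 𝕜 : Type*} [Fintype ι] [RCLike 𝕜]

/-- The classical transition matrix of a Kraus family: entry `(i, j)` is the probability of finding
the basis state `i` after applying the Kraus map to the basis state `j`. -/
def krausTransition (K : ι → Matrix m n 𝕜) : Matrix m n ℝ :=
  of fun i j => ∑ k, ‖K k i j‖ ^ 2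

theorem krausTransition_nonneg (K : ι → Matrix m n 𝕜) (i : m) (j : n) :
    0 ≤ krausTransition K i j :=
  Finset.sum_nonneg fun _ _ => by positivity

theorem sum_krausTransition_eq_one [Fintype m] [DecidableEq n] {K : ι → Matrix m n 𝕜}
    (hK : ∑ k, (K k)ᴴ * K k = 1) (j : n) : ∑ i, krausTransition K i j = 1 := by
  have hjj : (∑ k, (K k)ᴴ * K k) j j = 1 := by rw [hK, one_apply_eq]
  simp only [Matrix.sum_apply, mul_apply, conjTranspose_apply, RCLike.star_def,
    RCLike.conj_mul] at hjj
  simp only [krausTransition, of_apply]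
  rw [Finset.sum_comm]
  exact_mod_cast hjj

theorem krausMap_diagonal_apply_self [Fintype n] [DecidableEq n] (K : ι → Matrix m n 𝕜)
    (d : n → ℝ) (i : m) :
    krausMap K (diagonal fun j => (d j : 𝕜)) i i = ((krausTransition K *ᵥ d) i : ℝ) := by
  simp only [krausMap, Matrix.sum_apply, mul_apply (N := (K _)ᴴ), mul_diagonal,
    conjTranspose_apply, RCLike.star_def, krausTransition, mulVec, dotProduct, of_apply,
    Finset.sum_mul]
  rw [Finset.sum_comm]
  push_cast
  exact Finset.sum_congr rfl fun j _ => Finset.sum_congr rfl fun k _ => by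
    rw [mul_right_comm, RCLike.mul_conj]

theorem krausTransition_mulVec_eq_of_krausMap_diagonal_eq [Fintype n] [DecidableEq n]
    [DecidableEq m] {K : ι → Matrix m n 𝕜} {d : n → ℝ} {e : m → ℝ}
    (h : krausMap K (diagonal fun j => (d j : 𝕜)) = diagonal fun i => (e i : 𝕜)) :
    krausTransition K *ᵥ d = e := by
  ext i
  have hii := krausMap_diagonal_apply_self K d i
  rw [h, diagonal_apply_eq] at hii
  exact_mod_cast hii.symm

theorem apply_mul_le_mulVec_apply [Fintype n] {T : Matrix m n ℝ} {d : n → ℝ}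
    (hT : ∀ i j, 0 ≤ T i j) (hd : 0 ≤ d) (i : m) (j : n) : T i j * d j ≤ (T *ᵥ d) i :=
  Finset.single_le_sum (f := fun j => T i j * d j) (fun j _ => mul_nonneg (hT i j) (hd j))
    (Finset.mem_univ j)

theorem apply_eq_zero_of_mulVec_apply_eq_zero [Fintype n] {T : Matrix m n ℝ} {d : n → ℝ}
    (hT : ∀ i j, 0 ≤ T i j) (hd : 0 ≤ d) {i : m} {j : n} (hj : 0 < d j)
    (h : (T *ᵥ d) i = 0) : T i j = 0 :=
  le_antisymm (nonpos_of_mul_nonpos_left (h ▸ apply_mul_le_mulVec_apply hT hd i j) hj) (hT i j)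

end Transition

section Relabel

variable {m n R : Type*} [DecidableEq m] [DecidableEq n]

/-- The Kraus operators `c j • |f j⟩⟨j|`: measure in the standard basis, keep outcome `j` with
amplitude `c j`, and prepare the basis state `f j`. -/
def relabelKraus [Zero R] (f : n → m) (c : n → R) (j : n) : Matrix m n R :=
  single (f j) j (c j)

variable [Fintype n] [Semiring R] [StarRing R]

theorem sum_relabelKraus_conjTranspose_mul_self [Fintype m] (f : n → m) (c : n → R) :
    ∑ j, (relabelKraus f c j)ᴴ * relabelKraus f c j = diagonal fun j => star (c j) * c j := by
  simp only [relabelKraus, conjTranspose_single, single_mul_single_same, sum_single_eq_diagonal]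

theorem krausMap_relabelKraus (f : n → m) (c : n → R) (X : Matrix n n R) :
    krausMap (relabelKraus f c) X = ∑ j, single (f j) (f j) (c j * X j j * star (c j)) := by
  simp only [krausMap, relabelKraus, conjTranspose_single, single_mul_mul_single]

theorem degradesTo_of_eq_sum_single [Fintype m] {α : Type*} {d : ℕ}
    {Φ : α → Matrix (Fin d) (Fin d) R} {Ψ : α → Matrix m m R} (f : Fin d → m)
    (h : ∀ ρ, Ψ ρ = ∑ j, single (f j) (f j) (Φ ρ j j)) : DegradesTo Φ Ψ := by
  refine ⟨d, relabelKraus f 1, ?_, fun ρ => ?_⟩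
  · simp [sum_relabelKraus_conjTranspose_mul_self]
  · simp [krausMap_relabelKraus, h]

end Relabel

section Attenuation

variable {u v : ℝ}

/-- The operator `√u |1⟩⟨0| + √v |2⟩⟨1|` on a qubit with an erasure flag (level `2`): it attenuates
the qubit levels by `u` and `v` and moves them up by one, which is where `GammaPDLc` stores the
light lost from them. -/
noncomputable def shiftAttenuation (u v : ℝ) : Matrix (Fin 3) (Fin 3) ℂ :=
  !![0, 0, 0; (√u : ℂ), 0, 0; 0, (√v : ℂ), 0]

/-- Kraus operators of the trace preserving completion of `shiftAttenuation u v` that sends what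
the attenuation removes, and the erasure flag, to level `0`. -/
noncomputable def attenuationKraus (u v : ℝ) : Fin 4 → Matrix (Fin 3) (Fin 3) ℂ :=
  Fin.cons (shiftAttenuation u v)
    (relabelKraus (fun _ => 0) ![(√(1 - u) : ℂ), (√(1 - v) : ℂ), 1])

theorem ofReal_sqrt_mul_self {x : ℝ} (hx : 0 ≤ x) : (√x : ℂ) * √x = x := by
  exact_mod_cast Real.mul_self_sqrt hx

theorem shiftAttenuation_conjTranspose_mul_self (hu : 0 ≤ u) (hv : 0 ≤ v) :
    (shiftAttenuation u v)ᴴ * shiftAttenuation u v = diagonal ![(u : ℂ), (v : ℂ), 0] := by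
  ext i j
  fin_cases i <;> fin_cases j <;>
    simp [shiftAttenuation, mul_apply, Fin.sum_univ_three, ofReal_sqrt_mul_self, hu, hv]

theorem shiftAttenuation_mul_mul_conjTranspose (hu : 0 ≤ u) (hv : 0 ≤ v)
    (X : Matrix (Fin 3) (Fin 3) ℂ) :
    shiftAttenuation u v * X * (shiftAttenuation u v)ᴴ =
      !![0, 0, 0; 0, u * X 0 0, √u * √v * X 0 1; 0, √u * √v * X 1 0, v * X 1 1] := by
  ext i j
  fin_cases i <;> fin_cases j <;>
    simp [shiftAttenuation, vecMul, dotProduct, mul_apply, Fin.sum_univ_three]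
  · linear_combination X 0 0 * ofReal_sqrt_mul_self hu
  · ring
  · ring
  · linear_combination X 1 1 * ofReal_sqrt_mul_self hv

theorem sum_attenuationKraus_conjTranspose_mul_self (hu : u ∈ Set.Icc (0 : ℝ) 1)
    (hv : v ∈ Set.Icc (0 : ℝ) 1) :
    ∑ k, (attenuationKraus u v k)ᴴ * attenuationKraus u v k = 1 := by
  simp only [attenuationKraus, Fin.sum_univ_succ (n := 3), Fin.cons_zero, Fin.cons_succ,
    sum_relabelKraus_conjTranspose_mul_self, shiftAttenuation_conjTranspose_mul_self hu.1 hv.1,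
    diagonal_add, ← diagonal_one]
  congr 1 with j
  fin_cases j <;> simp [ofReal_sqrt_mul_self, hu.2, hv.2]

theorem krausMap_attenuationKraus (hu : u ∈ Set.Icc (0 : ℝ) 1) (hv : v ∈ Set.Icc (0 : ℝ) 1)
    (X : Matrix (Fin 3) (Fin 3) ℂ) :
    krausMap (attenuationKraus u v) X =
      !![(1 - u) * X 0 0 + (1 - v) * X 1 1 + X 2 2, 0, 0;
         0, u * X 0 0, √u * √v * X 0 1;
         0, √u * √v * X 1 0, v * X 1 1] := by
  have hsplit : krausMap (attenuationKraus u v) X =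
      shiftAttenuation u v * X * (shiftAttenuation u v)ᴴ +
        krausMap (relabelKraus (fun _ => 0) ![(√(1 - u) : ℂ), (√(1 - v) : ℂ), 1]) X :=
    Fin.sum_univ_succ _
  rw [hsplit, shiftAttenuation_mul_mul_conjTranspose hu.1 hv.1, krausMap_relabelKraus]
  ext i j
  fin_cases i <;> fin_cases j <;>
    simp [Fin.sum_univ_three, mul_right_comm _ (X _ _), ofReal_sqrt_mul_self, hu.2, hv.2]

end Attenuation

section PDL

variable {pH pV : ℝ}

theorem gammaPDL_single_zero_zero :
    GammaPDL pH pV (single 0 0 1) = diagonal fun j => ((![pH, 0, 1 - pH] j : ℝ) : ℂ) := by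
  ext i j
  fin_cases i <;> fin_cases j <;> simp [GammaPDL]

theorem gammaPDL_single_one_one :
    GammaPDL pH pV (single 1 1 1) = diagonal fun j => ((![0, pV, 1 - pV] j : ℝ) : ℂ) := by
  ext i j
  fin_cases i <;> fin_cases j <;> simp [GammaPDL]

theorem gammaPDLc_single_zero_zero :
    GammaPDLc pH pV (single 0 0 1) = diagonal fun j => ((![pH, 1 - pH, 0] j : ℝ) : ℂ) := by
  ext i j
  fin_cases i <;> fin_cases j <;> simp [GammaPDLc]

theorem gammaPDLc_single_one_one :
    GammaPDLc pH pV (single 1 1 1) = diagonal fun j => ((![pV, 0, 1 - pV] j : ℝ) : ℂ) := by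
  ext i j
  fin_cases i <;> fin_cases j <;> simp [GammaPDLc]

theorem half_le_min_of_mulVec_eq {T : Matrix (Fin 3) (Fin 3) ℝ} (hT : ∀ i j, 0 ≤ T i j)
    (hflag : ∑ i, T i 2 = 1) (hH : pH ∈ Set.Ico (0 : ℝ) 1) (hV : pV ∈ Set.Ico (0 : ℝ) 1)
    (hTH : T *ᵥ ![pH, 0, 1 - pH] = ![pH, 1 - pH, 0])
    (hTV : T *ᵥ ![0, pV, 1 - pV] = ![pV, 0, 1 - pV]) : 1 / 2 ≤ min pH pV := by
  have hqH : 0 < 1 - pH := sub_pos.2 hH.2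
  have hqV : 0 < 1 - pV := sub_pos.2 hV.2
  have hdH : 0 ≤ ![pH, 0, 1 - pH] := by
    intro j; fin_cases j <;> simp [hH.1, hH.2.le]
  have hdV : 0 ≤ ![0, pV, 1 - pV] := by
    intro j; fin_cases j <;> simp [hV.1, hV.2.le]
  have hT22 : T 2 2 = 0 := apply_eq_zero_of_mulVec_apply_eq_zero hT hdH hqH (by rw [hTH]; rfl)
  have hT12 : T 1 2 = 0 := apply_eq_zero_of_mulVec_apply_eq_zero hT hdV hqV (by rw [hTV]; rfl)
  have hT02 : T 0 2 = 1 := by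
    simpa [Fin.sum_univ_three, hT12, hT22] using hflag
  have hleH : 1 - pH ≤ pH := by
    simpa [hTH, hT02] using apply_mul_le_mulVec_apply hT hdH 0 2
  have hleV : 1 - pV ≤ pV := by
    simpa [hTV, hT02] using apply_mul_le_mulVec_apply hT hdV 0 2
  exact le_min (by linarith) (by linarith)

theorem half_le_min_of_gammaPDL_degradesTo (hH : pH ∈ Set.Ico (0 : ℝ) 1)
    (hV : pV ∈ Set.Ico (0 : ℝ) 1) (h : DegradesTo (GammaPDL pH pV) (GammaPDLc pH pV)) :
    1 / 2 ≤ min pH pV := by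
  obtain ⟨M, K, hK, hdegrade⟩ := h
  have hKH : krausMap K (diagonal fun j => ((![pH, 0, 1 - pH] j : ℝ) : ℂ)) =
      diagonal fun i => ((![pH, 1 - pH, 0] i : ℝ) : ℂ) := by
    rw [← gammaPDL_single_zero_zero, hdegrade, gammaPDLc_single_zero_zero]
  have hKV : krausMap K (diagonal fun j => ((![0, pV, 1 - pV] j : ℝ) : ℂ)) =
      diagonal fun i => ((![pV, 0, 1 - pV] i : ℝ) : ℂ) := by
    rw [← gammaPDL_single_one_one, hdegrade, gammaPDLc_single_one_one]
  exact half_le_min_of_mulVec_eq (krausTransition_nonneg K) (sum_krausTransition_eq_one hK 2) hH hV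
    (krausTransition_mulVec_eq_of_krausMap_diagonal_eq hKH)
    (krausTransition_mulVec_eq_of_krausMap_diagonal_eq hKV)

theorem one_sub_div_self_mem_Icc {p : ℝ} (hp : p ∈ Set.Icc (1 / 2 : ℝ) 1) :
    (1 - p) / p ∈ Set.Icc (0 : ℝ) 1 := by
  have hpos : 0 < p := by linarith [hp.1]
  exact ⟨div_nonneg (sub_nonneg.2 hp.2) hpos.le, (div_le_one hpos).2 (by linarith [hp.1])⟩

theorem sqrt_one_sub_mul_one_sub (hH : pH ∈ Set.Ioc (0 : ℝ) 1) (hV : 0 < pV) :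
    √((1 - pH) * (1 - pV)) = √((1 - pH) / pH) * √((1 - pV) / pV) * √(pH * pV) := by
  have hqH : 0 ≤ (1 - pH) / pH := div_nonneg (sub_nonneg.2 hH.2) hH.1.le
  rw [← Real.sqrt_mul hqH, ← Real.sqrt_mul' _ (mul_pos hH.1 hV).le]
  congr 1
  field_simp [hH.1.ne']

theorem gammaPDL_degradesTo_of_half_le (hH : pH ∈ Set.Icc (1 / 2 : ℝ) 1)
    (hV : pV ∈ Set.Icc (1 / 2 : ℝ) 1) : DegradesTo (GammaPDL pH pV) (GammaPDLc pH pV) := by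
  have hposH : 0 < pH := by linarith [hH.1]
  have hposV : 0 < pV := by linarith [hV.1]
  have huH := one_sub_div_self_mem_Icc hH
  have huV := one_sub_div_self_mem_Icc hV
  refine ⟨4, attenuationKraus ((1 - pH) / pH) ((1 - pV) / pV),
    sum_attenuationKraus_conjTranspose_mul_self huH huV, fun ρ => ?_⟩
  have hH0 : (pH : ℂ) ≠ 0 := by exact_mod_cast hposH.ne'
  have hV0 : (pV : ℂ) ≠ 0 := by exact_mod_cast hposV.ne'
  rw [krausMap_attenuationKraus huH huV, GammaPDLc, sqrt_one_sub_mul_one_sub ⟨hposH, hH.2⟩ hposV]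
  ext i j
  fin_cases i <;> fin_cases j <;> simp [GammaPDL, trace_fin_two] <;> field_simp
  ring

theorem gammaPDL_degradesTo_one_left : DegradesTo (GammaPDL 1 pV) (GammaPDLc 1 pV) :=
  degradesTo_of_eq_sum_single ![0, 0, 2] fun ρ => by
    ext i j
    fin_cases i <;> fin_cases j <;>
      simp [GammaPDL, GammaPDLc, trace_fin_two, Fin.sum_univ_three, sub_mul]

theorem gammaPDL_degradesTo_one_right : DegradesTo (GammaPDL pH 1) (GammaPDLc pH 1) :=
  degradesTo_of_eq_sum_single ![0, 0, 1] fun ρ => by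
    ext i j
    fin_cases i <;> fin_cases j <;>
      simp [GammaPDL, GammaPDLc, trace_fin_two, Fin.sum_univ_three, sub_mul]
    ring

end PDL

/-- the generalized erasure channel of the polarization dependent loss
operation is degradable iff min(p_H, p_V) ≥ 1/2, or p_H = 1, or p_V = 1. -/
theorem pdl_gec_degradable_iff (pH pV : ℝ)
    (hH : pH ∈ Set.Icc (0:ℝ) 1) (hV : pV ∈ Set.Icc (0:ℝ) 1) :
    (∃ (M : ℕ) (Km : Fin M → Matrix (Fin 3) (Fin 3) ℂ),
      ∑ m, (Km m)ᴴ * Km m = 1 ∧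
      ∀ ρ : Matrix (Fin 2) (Fin 2) ℂ,
        ∑ m, Km m * GammaPDL pH pV ρ * (Km m)ᴴ = GammaPDLc pH pV ρ)
    ↔ (1/2 ≤ min pH pV ∨ pH = 1 ∨ pV = 1) := by
  change DegradesTo (GammaPDL pH pV) (GammaPDLc pH pV) ↔ _
  constructor
  · intro hdegrade
    by_cases hH1 : pH = 1
    · exact .inr (.inl hH1)
    by_cases hV1 : pV = 1
    · exact .inr (.inr hV1)
    exact .inl (half_le_min_of_gammaPDL_degradesTo ⟨hH.1, hH.2.lt_of_ne hH1⟩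
      ⟨hV.1, hV.2.lt_of_ne hV1⟩ hdegrade)
  · rintro (hhalf | rfl | rfl)
    · exact gammaPDL_degradesTo_of_half_le ⟨hhalf.trans (min_le_left _ _), hH.2⟩
        ⟨hhalf.trans (min_le_right _ _), hV.2⟩
    · exact gammaPDL_degradesTo_one_left
    · exact gammaPDL_degradesTo_one_right
end

section
/- Let p_H, p_V ∈ [0,1] and let q(ρ) = S(Γ(ρ)) − S(Γ̃(ρ)) be the coherent information of the generalized erasure channel of the polarization dependent loss operation. Then: (a) if max(p_H, p_V) ≤ 1/2, then q(ρ) ≤ 0 for every 2×2 density matrix ρ; (b) if max(p_H, p_V) > 1/2 and p_H > 0 and p_V > 0, then there exists a 2×2 density matrix ρ with q(ρ) > 0. -/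
open Matrix ComplexOrder

/-!
Write `A` for the loss operator, `B` for the one with the complementary probabilities, and
`h(M) = S(M) - S(tr M)` for the homogeneous extension of the entropy. Up to a permutation of the
basis `Γ(ρ) = AρAᴴ ⊕ tr(BρBᴴ)` and `Γ̃(ρ) = BρBᴴ ⊕ tr(AρAᴴ)`, so the coherent information is
`h(AρAᴴ) - h(BρBᴴ)`.

The function `h` is monotone in the positive semidefinite order. Writing `ρ = CCᴴ`, the matrices
`AρAᴴ` and `BρBᴴ` are isospectral to `CᴴAᴴAC` and `CᴴBᴴBC`, and `AᴴA ≤ BᴴB` when both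
probabilities are at most `1/2`; this gives (a). For (b), say with `p_H > 1/2`, the state
`diag(ε, 1 - ε)` has coherent information at least `(2 p_H - 1) ε log (1/ε) - O(ε)` as `ε → 0`.
-/

section ShannonEntropy

open Real Finset

variable {ι : Type*} [Fintype ι] {x y : ι → ℝ}

/-- The Shannon entropy of a family of nonnegative weights, extended from probability vectors by
homogeneity: for total weight `s > 0` it is `s` times the entropy of the distribution `x / s`. -/
noncomputable def homEntropy (x : ι → ℝ) : ℝ :=
  ∑ i, negMulLog (x i) - negMulLog (∑ i, x i)

lemma homEntropy_eq_sum_mul_log_sub_log (x : ι → ℝ) :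
    homEntropy x = ∑ i, x i * (log (∑ j, x j) - log (x i)) := by
  simp only [homEntropy, negMulLog, mul_sub, sum_sub_distrib, ← sum_mul, neg_mul, sum_neg_distrib]
  ring

lemma mul_log_div_le_sub {a b : ℝ} (ha : 0 < a) (hb : 0 < b) : a * log (b / a) ≤ b - a :=
  calc a * log (b / a) ≤ a * (b / a - 1) := by
        gcongr
        exact log_le_sub_one_of_pos (by positivity)
    _ = b - a := by field_simp

-- Gibbs' inequality: coding the weights `x` with the distribution `y / ∑ y` is never shorter.
lemma homEntropy_le_sum_mul_log_sub_log (hx : 0 ≤ x) (hy : 0 ≤ y) (hxy : ∀ i, y i = 0 → x i = 0) :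
    homEntropy x ≤ ∑ i, x i * (log (∑ j, y j) - log (y i)) := by
  rw [homEntropy_eq_sum_mul_log_sub_log]
  set s := ∑ j, x j
  set t := ∑ j, y j
  have hs : 0 ≤ s := sum_nonneg fun i _ => hx i
  have ht : 0 ≤ t := sum_nonneg fun i _ => hy i
  have term_le (i : ι) :
      x i * (log s - log (x i)) ≤ x i * (log t - log (y i)) + (y i * (s / t) - x i) := by
    rcases (hx i).eq_or_lt' with hxi | hxi
    · have := mul_nonneg (hy i) (div_nonneg hs ht)
      simpa [hxi] using this
    have hyi : 0 < y i := (hy i).lt_of_ne' fun h => hxi.ne' (hxy i h)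
    have hs : 0 < s := sum_pos' (fun j _ => hx j) ⟨i, mem_univ i, hxi⟩
    have ht : 0 < t := sum_pos' (fun j _ => hy j) ⟨i, mem_univ i, hyi⟩
    have := mul_log_div_le_sub hxi (b := y i * (s / t)) (by positivity)
    rw [log_div (by positivity) hxi.ne', log_mul hyi.ne' (by positivity),
      log_div hs.ne' ht.ne'] at this
    linarith
  have correction_nonpos : ∑ i, (y i * (s / t) - x i) ≤ 0 := by
    rw [sum_sub_distrib, ← sum_mul, sub_nonpos, mul_div_left_comm]
    exact mul_le_of_le_one_right hs (div_self_le_one t)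
  calc ∑ i, x i * (log s - log (x i))
      ≤ ∑ i, (x i * (log t - log (y i)) + (y i * (s / t) - x i)) := sum_le_sum fun i _ => term_le i
    _ ≤ ∑ i, x i * (log t - log (y i)) := by
        rw [sum_add_distrib]
        linarith

-- The Gibbs bound is linear in `x` with nonnegative coefficients, and sharp at `x = y`.
theorem homEntropy_mono (hx : 0 ≤ x) (hxy : x ≤ y) : homEntropy x ≤ homEntropy y := by
  have hy : 0 ≤ y := hx.trans hxy
  refine (homEntropy_le_sum_mul_log_sub_log hx hy fun i hi =>
    le_antisymm ((hxy i).trans_eq hi) (hx i)).trans ?_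
  rw [homEntropy_eq_sum_mul_log_sub_log]
  refine sum_le_sum fun i _ => ?_
  rcases (hy i).eq_or_lt' with hyi | hyi
  · have hxi : x i = 0 := le_antisymm ((hxy i).trans_eq hyi) (hx i)
    simp [hxi, hyi]
  · have : log (y i) ≤ log (∑ j, y j) :=
      log_le_log hyi (single_le_sum (fun j _ => hy j) (mem_univ i))
    exact mul_le_mul_of_nonneg_right (hxy i) (sub_nonneg.2 this)

lemma homEntropy_pair (a b : ℝ) :
    homEntropy ![a, b] = negMulLog a + negMulLog b - negMulLog (a + b) := by
  simp [homEntropy, Fin.sum_univ_two]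

lemma homEntropy_pair_comm (a b : ℝ) : homEntropy ![a, b] = homEntropy ![b, a] := by
  rw [homEntropy_pair, homEntropy_pair, add_comm a b, add_comm (negMulLog a)]

lemma negMulLog_add_mul_log_le_homEntropy {a b : ℝ} (ha : 0 ≤ a) (hb : 0 < b) :
    negMulLog a + a * log b ≤ homEntropy ![a, b] := by
  have gap_nonneg : 0 ≤ (a + b) * (log (a + b) - log b) :=
    mul_nonneg (by positivity) (sub_nonneg.2 (log_le_log hb (by linarith)))
  rw [homEntropy_pair]
  simp only [negMulLog]
  linarith

lemma homEntropy_le_negMulLog_add {a b : ℝ} (ha : 0 ≤ a) (hb : 0 ≤ b) (hab : a + b ≤ 1) :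
    homEntropy ![a, b] ≤ negMulLog a + a :=
  calc homEntropy ![a, b] ≤ homEntropy ![a, 1 - a] := by
        apply homEntropy_mono <;> intro i <;> fin_cases i <;> simp <;> linarith
    _ = negMulLog a + negMulLog (1 - a) := by simp [homEntropy_pair]
    _ ≤ negMulLog a + a := by
        have := negMulLog_le_one_sub_self (x := 1 - a) (by linarith)
        linarith

-- As `ε → 0` the difference is at least `(2 * p - 1) * negMulLog ε - O(ε)`.
lemma exists_homEntropy_pair_lt {p r : ℝ} (hp : 1 / 2 < p) (hp1 : p ≤ 1) (hr : 0 < r)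
    (hr1 : r ≤ 1) : ∃ ε ∈ Set.Ioo (0 : ℝ) 1,
      homEntropy ![(1 - p) * ε, (1 - r) * (1 - ε)] < homEntropy ![p * ε, r * (1 - ε)] := by
  let c := negMulLog (1 - p) + (1 - p) - negMulLog p - p * log (r / 2)
  have eventually_small : ∀ᶠ ε in nhdsWithin (0 : ℝ) (Set.Ioi 0),
      ε ∈ Set.Ioo (0 : ℝ) (1 / 2) ∧ log ε < -c / (2 * p - 1) :=
    Filter.Eventually.and (Ioo_mem_nhdsGT (by norm_num))
      (tendsto_log_nhdsGT_zero.eventually_lt_atBot _)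
  obtain ⟨ε, ⟨hε0, hε⟩, hlog⟩ := eventually_small.exists
  refine ⟨ε, ⟨hε0, by linarith⟩, ?_⟩
  have upper : homEntropy ![(1 - p) * ε, (1 - r) * (1 - ε)] ≤
      negMulLog ((1 - p) * ε) + (1 - p) * ε :=
    homEntropy_le_negMulLog_add (mul_nonneg (by linarith) hε0.le)
      (mul_nonneg (by linarith) (by linarith)) (by nlinarith)
  have lower : negMulLog (p * ε) + p * ε * log (r * (1 - ε)) ≤ homEntropy ![p * ε, r * (1 - ε)] :=
    negMulLog_add_mul_log_le_homEntropy (mul_nonneg (by linarith) hε0.le)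
      (mul_pos hr (by linarith))
  have log_half_le : p * ε * log (r / 2) ≤ p * ε * log (r * (1 - ε)) :=
    mul_le_mul_of_nonneg_left (log_le_log (by positivity) (by nlinarith))
      (mul_nonneg (by linarith) hε0.le)
  have leading_term_wins : 0 < ε * ((2 * p - 1) * -log ε - c) := by
    rw [lt_div_iff₀ (by linarith)] at hlog
    exact mul_pos hε0 (by linarith)
  refine upper.trans_lt (lt_of_lt_of_le ?_ lower)
  rw [negMulLog_mul, negMulLog_mul p]
  simp only [c, negMulLog] at leading_term_wins ⊢
  linarith

end ShannonEntropy

section VonNeumannEntropy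

open Real Finset

lemma isHermitian_diagonal_ofReal {n : Type*} [DecidableEq n] (x : n → ℝ) :
    (diagonal fun i => (x i : ℂ)).IsHermitian :=
  isHermitian_diagonal_iff.2 fun i => Complex.conj_ofReal (x i)

lemma ofReal_re_trace {n : Type*} [Fintype n] {M : Matrix n n ℂ} (hM : M.IsHermitian) :
    (M.trace.re : ℂ) = M.trace :=
  Complex.conj_eq_iff_re.1 (by rw [← RCLike.star_def, ← trace_conjTranspose, hM.eq])

variable {m n : Type*} [Fintype m] [Fintype n] [DecidableEq m] [DecidableEq n]

lemma vnEnt_eq_sum_negMulLog_eigenvalues_s16 {M : Matrix n n ℂ} (hM : M.IsHermitian) :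
    vnEnt M = ∑ i, negMulLog (hM.eigenvalues i) := by
  simp only [vnEnt, dif_pos hM, negMulLog, neg_mul]

lemma vnEnt_eq_sum_roots_charpoly_s16 {M : Matrix n n ℂ} (hM : M.IsHermitian) :
    vnEnt M = (M.charpoly.roots.map fun z => negMulLog z.re).sum := by
  rw [vnEnt_eq_sum_negMulLog_eigenvalues_s16 hM, hM.roots_charpoly_eq_eigenvalues, Multiset.map_map]
  rfl

lemma vnEnt_eq_of_charpoly_eq {M : Matrix m m ℂ} {N : Matrix n n ℂ} (hM : M.IsHermitian)
    (hN : N.IsHermitian) (h : M.charpoly = N.charpoly) : vnEnt M = vnEnt N := by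
  rw [vnEnt_eq_sum_roots_charpoly_s16 hM, vnEnt_eq_sum_roots_charpoly_s16 hN, h]

lemma vnEnt_reindex {M : Matrix m m ℂ} (hM : M.IsHermitian) (e : m ≃ n) :
    vnEnt (reindex e e M) = vnEnt M :=
  vnEnt_eq_of_charpoly_eq (hM.submatrix e.symm) hM (charpoly_reindex e M)

lemma vnEnt_fromBlocks_zero {M : Matrix m m ℂ} {N : Matrix n n ℂ} (hM : M.IsHermitian)
    (hN : N.IsHermitian) : vnEnt (fromBlocks M 0 0 N) = vnEnt M + vnEnt N := by
  have hMN : (fromBlocks M 0 0 N).IsHermitian := hM.fromBlocks (by simp) hN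
  rw [vnEnt_eq_sum_roots_charpoly_s16 hMN, vnEnt_eq_sum_roots_charpoly_s16 hM,
    vnEnt_eq_sum_roots_charpoly_s16 hN, charpoly_fromBlocks_zero₁₂,
    Polynomial.roots_mul (mul_ne_zero M.charpoly_monic.ne_zero N.charpoly_monic.ne_zero),
    Multiset.map_add, Multiset.sum_add]

lemma vnEnt_diagonal (x : n → ℝ) :
    vnEnt (diagonal fun i => (x i : ℂ)) = ∑ i, negMulLog (x i) := by
  rw [vnEnt_eq_sum_roots_charpoly_s16 (isHermitian_diagonal_ofReal x), charpoly_diagonal,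
    Polynomial.roots_prod _ _ (prod_ne_zero_iff.2 fun i _ => Polynomial.X_sub_C_ne_zero _)]
  simp

-- The two products have the same nonzero eigenvalues, and zero eigenvalues carry no entropy.
lemma vnEnt_mul_conjTranspose_self (X : Matrix m n ℂ) : vnEnt (X * Xᴴ) = vnEnt (Xᴴ * X) := by
  have hroots := congrArg (fun P : Polynomial ℂ => (P.roots.map fun z => negMulLog z.re).sum)
    (charpoly_mul_comm' X Xᴴ)
  have hX (k : ℕ) : (Polynomial.X ^ k : Polynomial ℂ) ≠ 0 := pow_ne_zero k Polynomial.X_ne_zero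
  simp only [Polynomial.roots_mul (mul_ne_zero (hX _) (charpoly_monic _).ne_zero),
    Polynomial.roots_X_pow, Multiset.map_add, Multiset.sum_add, Multiset.map_nsmul,
    Multiset.sum_nsmul, Multiset.map_singleton, Multiset.sum_singleton, Complex.zero_re,
    negMulLog_zero, smul_zero, zero_add] at hroots
  rwa [vnEnt_eq_sum_roots_charpoly_s16 (isHermitian_mul_conjTranspose_self X),
    vnEnt_eq_sum_roots_charpoly_s16 (isHermitian_conjTranspose_mul_self X)]

lemma charpoly_unitary_conj (U : unitaryGroup n ℂ) (M : Matrix n n ℂ) :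
    ((U : Matrix n n ℂ)ᴴ * M * U).charpoly = M.charpoly := by
  rw [charpoly_mul_comm, ← mul_assoc, ← star_eq_conjTranspose, mem_unitaryGroup_iff.1 U.2, one_mul]

lemma conjTranspose_eigenvectorUnitary_mul_mul {M : Matrix n n ℂ} (hM : M.IsHermitian) :
    (hM.eigenvectorUnitary : Matrix n n ℂ)ᴴ * M * hM.eigenvectorUnitary =
      diagonal fun i => (hM.eigenvalues i : ℂ) := by
  have := hM.conjStarAlgAut_star_eigenvectorUnitary
  rwa [Unitary.conjStarAlgAut_star_apply] at this

lemma sum_normSq_row_unitary (U : unitaryGroup n ℂ) (i : n) :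
    ∑ j, Complex.normSq ((U : Matrix n n ℂ) i j) = 1 := by
  have h := congrFun (congrFun (mem_unitaryGroup_iff.1 U.2) i) i
  simp only [mul_apply, star_apply, RCLike.star_def, Complex.mul_conj, one_apply_eq] at h
  exact_mod_cast h

lemma sum_normSq_col_unitary (U : unitaryGroup n ℂ) (j : n) :
    ∑ i, Complex.normSq ((U : Matrix n n ℂ) i j) = 1 := by
  simpa [star_apply] using sum_normSq_row_unitary (star U) j

lemma re_diag_eq_sum_normSq_mul_eigenvalues {M : Matrix n n ℂ} (hM : M.IsHermitian) (i : n) :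
    (M i i).re = ∑ j, Complex.normSq ((hM.eigenvectorUnitary : Matrix n n ℂ) i j) *
      hM.eigenvalues j := by
  conv_lhs => rw [hM.spectral_theorem, Unitary.conjStarAlgAut_apply, mul_apply]
  simp only [mul_diagonal, star_apply, Complex.re_sum]
  refine sum_congr rfl fun j _ => ?_
  rw [mul_right_comm, RCLike.star_def, Complex.mul_conj]
  simp

-- The diagonal is obtained from the spectrum by the doubly stochastic matrix `|U i j| ^ 2`.
theorem vnEnt_le_sum_negMulLog_diag {M : Matrix n n ℂ} (hM : M.PosSemidef) :
    vnEnt M ≤ ∑ i, negMulLog (M i i).re := by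
  let w (i j : n) : ℝ := Complex.normSq ((hM.1.eigenvectorUnitary : Matrix n n ℂ) i j)
  have jensen (i : n) :
      ∑ j, w i j * negMulLog (hM.1.eigenvalues j) ≤ negMulLog (M i i).re := by
    rw [re_diag_eq_sum_normSq_mul_eigenvalues hM.1]
    exact concaveOn_negMulLog.le_map_sum (fun j _ => Complex.normSq_nonneg _)
      (sum_normSq_row_unitary _ i) fun j _ => hM.eigenvalues_nonneg j
  calc vnEnt M = ∑ j, (∑ i, w i j) * negMulLog (hM.1.eigenvalues j) := by
        simp only [w, sum_normSq_col_unitary, one_mul, vnEnt_eq_sum_negMulLog_eigenvalues_s16 hM.1]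
    _ = ∑ i, ∑ j, w i j * negMulLog (hM.1.eigenvalues j) := by
        simp only [sum_mul]
        exact sum_comm
    _ ≤ ∑ i, negMulLog (M i i).re := sum_le_sum fun i _ => jensen i

/-- The von Neumann entropy of positive semidefinite matrices, extended from density matrices by
homogeneity: for trace `t > 0` it is `t` times the entropy of the density matrix `t⁻¹ • M`. -/
noncomputable def homVnEnt (M : Matrix n n ℂ) : ℝ :=
  vnEnt M - negMulLog M.trace.re

lemma homVnEnt_eq_homEntropy_eigenvalues {M : Matrix n n ℂ} (hM : M.IsHermitian) :
    homVnEnt M = homEntropy hM.eigenvalues := by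
  rw [homVnEnt, homEntropy, vnEnt_eq_sum_negMulLog_eigenvalues_s16 hM, hM.trace_eq_sum_eigenvalues]
  simp

lemma homVnEnt_diagonal (x : n → ℝ) : homVnEnt (diagonal fun i => (x i : ℂ)) = homEntropy x := by
  simp [homVnEnt, homEntropy, vnEnt_diagonal, trace_diagonal]

lemma homVnEnt_mul_conjTranspose_self (X : Matrix m n ℂ) :
    homVnEnt (X * Xᴴ) = homVnEnt (Xᴴ * X) := by
  rw [homVnEnt, homVnEnt, vnEnt_mul_conjTranspose_self, trace_mul_comm]

lemma homVnEnt_unitary_conj {M : Matrix n n ℂ} (hM : M.IsHermitian) (U : unitaryGroup n ℂ) :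
    homVnEnt ((U : Matrix n n ℂ)ᴴ * M * (U : Matrix n n ℂ)) = homVnEnt M := by
  have hcharpoly := charpoly_unitary_conj U M
  rw [homVnEnt, homVnEnt, trace_eq_neg_charpoly_nextCoeff, trace_eq_neg_charpoly_nextCoeff,
    vnEnt_eq_of_charpoly_eq (isHermitian_conjTranspose_mul_mul _ hM) hM hcharpoly, hcharpoly]

lemma homVnEnt_le_homEntropy_diag {M : Matrix n n ℂ} (hM : M.PosSemidef) :
    homVnEnt M ≤ homEntropy fun i => (M i i).re := by
  have htrace : M.trace.re = ∑ i, (M i i).re := by simp [trace]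
  rw [homVnEnt, homEntropy, htrace]
  exact sub_le_sub_right (vnEnt_le_sum_negMulLog_diag hM) _

-- In an eigenbasis of `M` the diagonal of `N` lies below the spectrum of `M`, and passing from `N`
-- to its diagonal only increases the entropy.
theorem homVnEnt_mono {M N : Matrix n n ℂ} (hN : N.PosSemidef) (hNM : (M - N).PosSemidef) :
    homVnEnt N ≤ homVnEnt M := by
  have hM : M.IsHermitian := by simpa using hNM.1.add hN.1
  let U : Matrix n n ℂ := hM.eigenvectorUnitary
  have hN' : (Uᴴ * N * U).PosSemidef := hN.conjTranspose_mul_mul_same U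
  have diag_le (i : n) : ((Uᴴ * N * U) i i).re ≤ hM.eigenvalues i := by
    have h := (hNM.conjTranspose_mul_mul_same U).diag_nonneg (i := i)
    rw [mul_sub, sub_mul, conjTranspose_eigenvectorUnitary_mul_mul hM, Matrix.sub_apply,
      diagonal_apply_eq] at h
    simpa using (Complex.le_def.1 h).1
  calc homVnEnt N = homVnEnt (Uᴴ * N * U) := (homVnEnt_unitary_conj hN.1 _).symm
    _ ≤ homEntropy fun i => ((Uᴴ * N * U) i i).re := homVnEnt_le_homEntropy_diag hN'
    _ ≤ homEntropy hM.eigenvalues :=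
        homEntropy_mono (fun i => (Complex.le_def.1 hN'.diag_nonneg).1) diag_le
    _ = homVnEnt M := (homVnEnt_eq_homEntropy_eigenvalues hM).symm

-- For `ρ = C * Cᴴ`, this trades the output `K * ρ * Kᴴ` for a matrix that is monotone in `Kᴴ * K`.
lemma homVnEnt_conj_mul_conjTranspose_self {l : Type*} [Fintype l] (K : Matrix m l ℂ)
    (C : Matrix l n ℂ) : homVnEnt (K * (C * Cᴴ) * Kᴴ) = homVnEnt (Cᴴ * (Kᴴ * K) * C) := by
  simpa only [conjTranspose_mul, Matrix.mul_assoc] using homVnEnt_mul_conjTranspose_self (K * C)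

open scoped MatrixOrder in
theorem homVnEnt_conj_mono {l : Type*} [Fintype l] {A : Matrix m l ℂ} {B : Matrix n l ℂ}
    {ρ : Matrix l l ℂ} (hAB : (Bᴴ * B - Aᴴ * A).PosSemidef) (hρ : ρ.PosSemidef) :
    homVnEnt (A * ρ * Aᴴ) ≤ homVnEnt (B * ρ * Bᴴ) := by
  classical
  obtain ⟨C, rfl⟩ := CStarAlgebra.nonneg_iff_eq_mul_star_self.1 hρ.nonneg
  rw [star_eq_conjTranspose, homVnEnt_conj_mul_conjTranspose_self,
    homVnEnt_conj_mul_conjTranspose_self]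
  refine homVnEnt_mono ((posSemidef_conjTranspose_mul_self A).conjTranspose_mul_mul_same C) ?_
  simpa only [Matrix.mul_sub, Matrix.sub_mul] using hAB.conjTranspose_mul_mul_same C

end VonNeumannEntropy

section LossOperator

variable {n : Type*} [DecidableEq n]

/-- The Kraus operator `diag(√p)` that keeps the basis state `i` with probability `p i`. The
operator `A` of the polarization dependent loss is `lossOp ![pH, pV]`, and
`lossOp ![1 - pH, 1 - pV]` is the Kraus operator of the lost part. -/
noncomputable def lossOp (p : n → ℝ) : Matrix n n ℂ :=
  diagonal fun i => (√(p i) : ℂ)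

lemma conjTranspose_lossOp (p : n → ℝ) : (lossOp p)ᴴ = lossOp p :=
  isHermitian_diagonal_ofReal _

variable [Fintype n] {p q : n → ℝ}

lemma lossOp_conj_apply (p : n → ℝ) (ρ : Matrix n n ℂ) (i j : n) :
    (lossOp p * ρ * (lossOp p)ᴴ) i j = √(p i) * √(p j) * ρ i j := by
  rw [conjTranspose_lossOp, lossOp, mul_diagonal, diagonal_mul]
  ring

lemma lossOp_conj_diagonal (hp : 0 ≤ p) (w : n → ℝ) :
    lossOp p * (diagonal fun i => (w i : ℂ)) * (lossOp p)ᴴ =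
      diagonal fun i => ((p i * w i : ℝ) : ℂ) := by
  ext i j
  rw [lossOp_conj_apply]
  rcases eq_or_ne i j with rfl | hij
  · simp [← Complex.ofReal_mul, Real.mul_self_sqrt (hp i)]
  · simp [hij]

lemma conjTranspose_lossOp_mul_self (hp : 0 ≤ p) :
    (lossOp p)ᴴ * lossOp p = diagonal fun i => (p i : ℂ) := by
  simpa [conjTranspose_lossOp] using lossOp_conj_diagonal hp 1

theorem homVnEnt_lossOp_mono {ρ : Matrix n n ℂ} (hp : 0 ≤ p) (hpq : p ≤ q) (hρ : ρ.PosSemidef) :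
    homVnEnt (lossOp p * ρ * (lossOp p)ᴴ) ≤ homVnEnt (lossOp q * ρ * (lossOp q)ᴴ) := by
  refine homVnEnt_conj_mono ?_ hρ
  rw [conjTranspose_lossOp_mul_self hp, conjTranspose_lossOp_mul_self (hp.trans hpq),
    diagonal_sub]
  exact .diagonal fun i => by simpa using hpq i

lemma homVnEnt_lossOp_diagonal (hp : 0 ≤ p) (w : n → ℝ) :
    homVnEnt (lossOp p * (diagonal fun i => (w i : ℂ)) * (lossOp p)ᴴ) = homEntropy (p * w) := by
  rw [lossOp_conj_diagonal hp, homVnEnt_diagonal]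
  rfl

end LossOperator

section PolarizationDependentLoss

open Real

variable {pH pV : ℝ} {ρ : Matrix (Fin 2) (Fin 2) ℂ}

lemma lossOp_conj_fin_two (hH : 0 ≤ pH) (hV : 0 ≤ pV) :
    lossOp ![pH, pV] * ρ * (lossOp ![pH, pV])ᴴ =
      !![pH * ρ 0 0, √(pH * pV) * ρ 0 1; √(pH * pV) * ρ 1 0, pV * ρ 1 1] := by
  ext i j
  rw [lossOp_conj_apply]
  fin_cases i <;> fin_cases j <;>
    simp [← Complex.ofReal_mul, mul_self_sqrt, sqrt_mul, hH, hV, mul_comm √pV]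

lemma trace_lossOp_conj_fin_two (hH : 0 ≤ pH) (hV : 0 ≤ pV) :
    (lossOp ![pH, pV] * ρ * (lossOp ![pH, pV])ᴴ).trace = pH * ρ 0 0 + pV * ρ 1 1 := by
  rw [lossOp_conj_fin_two hH hV, trace_fin_two_of]

lemma GammaPDL_eq_reindex_fromBlocks (hH : pH ∈ Set.Icc 0 1) (hV : pV ∈ Set.Icc 0 1) :
    GammaPDL pH pV ρ = reindex finSumFinEquiv finSumFinEquiv
      (fromBlocks (lossOp ![pH, pV] * ρ * (lossOp ![pH, pV])ᴴ) 0 0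
        (diagonal fun _ : Fin 1 =>
          (lossOp ![1 - pH, 1 - pV] * ρ * (lossOp ![1 - pH, 1 - pV])ᴴ).trace)) := by
  have htrace : ρ.trace - pH * ρ 0 0 - pV * ρ 1 1 =
      ((1 - pH : ℝ) : ℂ) * ρ 0 0 + ((1 - pV : ℝ) : ℂ) * ρ 1 1 := by
    rw [trace_fin_two]
    push_cast
    ring
  rw [trace_lossOp_conj_fin_two (sub_nonneg.2 hH.2) (sub_nonneg.2 hV.2),
    lossOp_conj_fin_two hH.1 hV.1, GammaPDL, htrace]
  ext i j
  fin_cases i <;> fin_cases j <;> rfl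

lemma GammaPDLc_eq_reindex_fromBlocks (hH : pH ∈ Set.Icc 0 1) (hV : pV ∈ Set.Icc 0 1) :
    GammaPDLc pH pV ρ = reindex finSumFinEquiv finSumFinEquiv
      (fromBlocks (diagonal fun _ : Fin 1 => (lossOp ![pH, pV] * ρ * (lossOp ![pH, pV])ᴴ).trace)
        0 0 (lossOp ![1 - pH, 1 - pV] * ρ * (lossOp ![1 - pH, 1 - pV])ᴴ)) := by
  rw [trace_lossOp_conj_fin_two hH.1 hV.1,
    lossOp_conj_fin_two (sub_nonneg.2 hH.2) (sub_nonneg.2 hV.2)]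
  ext i j
  fin_cases i <;> fin_cases j <;> rfl

theorem vnEnt_GammaPDL_sub_vnEnt_GammaPDLc (hH : pH ∈ Set.Icc 0 1) (hV : pV ∈ Set.Icc 0 1)
    (hρ : ρ.IsHermitian) :
    vnEnt (GammaPDL pH pV ρ) - vnEnt (GammaPDLc pH pV ρ) =
      homVnEnt (lossOp ![pH, pV] * ρ * (lossOp ![pH, pV])ᴴ) -
        homVnEnt (lossOp ![1 - pH, 1 - pV] * ρ * (lossOp ![1 - pH, 1 - pV])ᴴ) := by
  have hkept := isHermitian_mul_mul_conjTranspose (lossOp ![pH, pV]) hρ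
  have hlost := isHermitian_mul_mul_conjTranspose (lossOp ![1 - pH, 1 - pV]) hρ
  rw [GammaPDL_eq_reindex_fromBlocks hH hV, GammaPDLc_eq_reindex_fromBlocks hH hV,
    ← ofReal_re_trace hkept, ← ofReal_re_trace hlost,
    vnEnt_reindex (hkept.fromBlocks (by simp) (isHermitian_diagonal_ofReal _)),
    vnEnt_reindex ((isHermitian_diagonal_ofReal _).fromBlocks (by simp) hlost),
    vnEnt_fromBlocks_zero hkept (isHermitian_diagonal_ofReal _),
    vnEnt_fromBlocks_zero (isHermitian_diagonal_ofReal _) hlost, vnEnt_diagonal, vnEnt_diagonal]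
  simp only [homVnEnt, Fin.sum_const, one_smul]
  ring

theorem vnEnt_GammaPDL_le_vnEnt_GammaPDLc (hH : pH ∈ Set.Icc 0 (1 / 2))
    (hV : pV ∈ Set.Icc 0 (1 / 2)) (hρ : ρ.PosSemidef) :
    vnEnt (GammaPDL pH pV ρ) ≤ vnEnt (GammaPDLc pH pV ρ) := by
  obtain ⟨hH0, hH⟩ := hH
  obtain ⟨hV0, hV⟩ := hV
  rw [← sub_nonpos, vnEnt_GammaPDL_sub_vnEnt_GammaPDLc ⟨hH0, by linarith⟩ ⟨hV0, by linarith⟩ hρ.1,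
    sub_nonpos]
  apply homVnEnt_lossOp_mono _ _ hρ <;> intro i <;> fin_cases i <;> simp <;> linarith

lemma vnEnt_GammaPDL_sub_vnEnt_GammaPDLc_diagonal (hH : pH ∈ Set.Icc 0 1) (hV : pV ∈ Set.Icc 0 1)
    (w : Fin 2 → ℝ) :
    vnEnt (GammaPDL pH pV (diagonal fun i => (w i : ℂ))) -
        vnEnt (GammaPDLc pH pV (diagonal fun i => (w i : ℂ))) =
      homEntropy ![pH * w 0, pV * w 1] - homEntropy ![(1 - pH) * w 0, (1 - pV) * w 1] := by
  have kept_nonneg : 0 ≤ ![pH, pV] := by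
    simpa [Pi.le_def, Fin.forall_fin_two] using And.intro hH.1 hV.1
  have lost_nonneg : 0 ≤ ![1 - pH, 1 - pV] := by
    simpa [Pi.le_def, Fin.forall_fin_two] using And.intro hH.2 hV.2
  have mul_pair (a b : ℝ) : ![a, b] * w = ![a * w 0, b * w 1] := by
    ext i
    fin_cases i <;> rfl
  rw [vnEnt_GammaPDL_sub_vnEnt_GammaPDLc hH hV (isHermitian_diagonal_ofReal w),
    homVnEnt_lossOp_diagonal kept_nonneg, homVnEnt_lossOp_diagonal lost_nonneg, mul_pair, mul_pair]

lemma exists_vnEnt_GammaPDL_sub_pos_of_homEntropy_lt (hH : pH ∈ Set.Icc 0 1)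
    (hV : pV ∈ Set.Icc 0 1) {a b : ℝ} (ha : 0 ≤ a) (hb : 0 ≤ b) (hab : a + b = 1)
    (h : homEntropy ![(1 - pH) * a, (1 - pV) * b] < homEntropy ![pH * a, pV * b]) :
    ∃ ρ : Matrix (Fin 2) (Fin 2) ℂ, ρ.PosSemidef ∧ ρ.trace = 1 ∧
      0 < vnEnt (GammaPDL pH pV ρ) - vnEnt (GammaPDLc pH pV ρ) := by
  refine ⟨diagonal fun i => (![a, b] i : ℂ), .diagonal fun i => ?_, ?_, ?_⟩
  · fin_cases i <;> simpa
  · simpa [trace_fin_two] using mod_cast hab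
  · rw [vnEnt_GammaPDL_sub_vnEnt_GammaPDLc_diagonal hH hV]
    exact sub_pos.2 h

theorem exists_vnEnt_GammaPDL_sub_pos (hH : pH ∈ Set.Ioc 0 1) (hV : pV ∈ Set.Ioc 0 1)
    (hmax : 1 / 2 < max pH pV) :
    ∃ ρ : Matrix (Fin 2) (Fin 2) ℂ, ρ.PosSemidef ∧ ρ.trace = 1 ∧
      0 < vnEnt (GammaPDL pH pV ρ) - vnEnt (GammaPDLc pH pV ρ) := by
  have hH' := Set.Ioc_subset_Icc_self hH
  have hV' := Set.Ioc_subset_Icc_self hV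
  rcases lt_max_iff.1 hmax with h | h
  · obtain ⟨ε, ⟨hε0, hε1⟩, hlt⟩ := exists_homEntropy_pair_lt h hH.2 hV.1 hV.2
    exact exists_vnEnt_GammaPDL_sub_pos_of_homEntropy_lt hH' hV' hε0.le (sub_nonneg.2 hε1.le)
      (add_sub_cancel ε 1) hlt
  · obtain ⟨ε, ⟨hε0, hε1⟩, hlt⟩ := exists_homEntropy_pair_lt h hV.2 hH.1 hH.2
    rw [homEntropy_pair_comm, homEntropy_pair_comm (pV * ε)] at hlt
    exact exists_vnEnt_GammaPDL_sub_pos_of_homEntropy_lt hH' hV' (sub_nonneg.2 hε1.le) hε0.le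
      (sub_add_cancel 1 ε) hlt

end PolarizationDependentLoss

/-- (a) if max(p_H, p_V) ≤ 1/2 the coherent information q(ρ) of the
generalized erasure channel of the polarization dependent loss operation is nonpositive on
all density matrices; (b) if max(p_H, p_V) > 1/2 and p_H, p_V > 0 then q(ρ) > 0 for some
density matrix ρ. -/
theorem pdl_coherent_information_sign (pH pV : ℝ)
    (hH : pH ∈ Set.Icc (0:ℝ) 1) (hV : pV ∈ Set.Icc (0:ℝ) 1) :
    (max pH pV ≤ 1/2 →
      ∀ ρ : Matrix (Fin 2) (Fin 2) ℂ, ρ.PosSemidef → ρ.trace = 1 →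
        vnEnt (GammaPDL pH pV ρ) - vnEnt (GammaPDLc pH pV ρ) ≤ 0) ∧
    (1/2 < max pH pV → 0 < pH → 0 < pV →
      ∃ ρ : Matrix (Fin 2) (Fin 2) ℂ, ρ.PosSemidef ∧ ρ.trace = 1 ∧
        0 < vnEnt (GammaPDL pH pV ρ) - vnEnt (GammaPDLc pH pV ρ)) := by
  refine ⟨fun hmax ρ hρ _ => ?_, fun hmax hH0 hV0 => ?_⟩
  · obtain ⟨hH_half, hV_half⟩ := max_le_iff.1 hmax
    exact sub_nonpos.2 (vnEnt_GammaPDL_le_vnEnt_GammaPDLc ⟨hH.1, hH_half⟩ ⟨hV.1, hV_half⟩ hρ)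
  · exact exists_vnEnt_GammaPDL_sub_pos ⟨hH0, hH.2⟩ ⟨hV0, hV.2⟩ hmax
end
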